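/- Let K be a local field (i.e. R, C, or a finite extension of Q_p) and let S be a smooth cubic surface in P^3 over K with S(K) ≠ ∅. Then there exists a non-empty subset W ⊆ S(K), open in the topology induced by K, such that [P_1] = [P_2] in H_S(K) for all P_1, P_2 ∈ W. -/

import Mathlib

/- Common framework: points, lines, intersection divisors, the secant-tangent span,
the groups `H_S(K)`, geometric notions over the algebraic closure, and topologies. -/

open MvPolynomial

noncomputable section

namespace CubicSurf

variable {K L : Type*} [Field K] [Field L] {n : ℕ}

/-- The set of `K`-rational points of the projective hypersurface `F = 0`. -/
def zeroSet (F : MvPolynomial (Fin n) K) : Set (Projectivization K (Fin n → K)) :=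
  {P | eval P.rep F = 0}

/-- The binary form obtained by restricting `F` to the line spanned by `u` and `v`,
via the parametrization `(s : t) ↦ s • u + t • v`. -/
def lineRestrict (F : MvPolynomial (Fin n) K) (u v : Fin n → K) : MvPolynomial (Fin 2) K :=
  aeval (fun i => C (u i) * X 0 + C (v i) * X 1) F

/-- A projective line: a 2-dimensional linear subspace of `K^n`. -/
def IsLine (W : Submodule K (Fin n → K)) : Prop := Module.finrank K W = 2

/-- The line `W` lies (geometrically) on the hypersurface `F = 0`. -/
def LineOnSurf (F : MvPolynomial (Fin n) K) (W : Submodule K (Fin n → K)) : Prop :=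
  ∀ u v : Fin n → K, u ∈ W → v ∈ W → lineRestrict F u v = 0

/-- The projective point `P` lies on the line `W`. -/
def OnLine (W : Submodule K (Fin n → K)) (P : Projectivization K (Fin n → K)) : Prop :=
  P.rep ∈ W

/-- The set of `K`-points of the line `W`. -/
def linePts (W : Submodule K (Fin n → K)) : Set (Projectivization K (Fin n → K)) :=
  {P | OnLine W P}

/-- `ℓ · S = P + Q + R`: the intersection divisor (with multiplicities) of the line `W`
with the hypersurface `F = 0` is `P + Q + R`. -/
def MeetsIn (F : MvPolynomial (Fin n) K) (W : Submodule K (Fin n → K))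
    (P Q R : Projectivization K (Fin n → K)) : Prop :=
  ∃ (u v : Fin n → K) (_ : u ∈ W) (_ : v ∈ W) (_ : LinearIndependent K ![u, v])
    (c : K) (l m : Fin 3 → K) (h : ∀ k, l k • u + m k • v ≠ 0),
      c ≠ 0 ∧
      lineRestrict F u v = C c * ∏ k : Fin 3, (C (m k) * X 0 - C (l k) * X 1) ∧
      Projectivization.mk K _ (h 0) = P ∧
      Projectivization.mk K _ (h 1) = Q ∧
      Projectivization.mk K _ (h 2) = R

/-- Membership in the span of a set of points under the secant/tangent process:
the smallest subset of `S(K)` containing `B` such that whenever `P`, `Q` are in it and a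
`K`-line `ℓ ⊄ S` satisfies `ℓ·S = P+Q+R` with `R ∈ S(K)`, then `R` is in it. -/
inductive SpanMem (F : MvPolynomial (Fin n) K) (B : Set (Projectivization K (Fin n → K))) :
    Projectivization K (Fin n → K) → Prop
  | base (P : Projectivization K (Fin n → K)) (hP : P ∈ B) : SpanMem F B P
  | secant (P Q R : Projectivization K (Fin n → K)) (W : Submodule K (Fin n → K))
      (hW : IsLine W) (hWS : ¬ LineOnSurf F W) (hP : SpanMem F B P) (hQ : SpanMem F B Q)
      (hR : R ∈ zeroSet F) (hm : MeetsIn F W P Q R) : SpanMem F B R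

/-- The span of a set of points under the secant/tangent process. -/
def Span (F : MvPolynomial (Fin n) K) (B : Set (Projectivization K (Fin n → K))) :
    Set (Projectivization K (Fin n → K)) :=
  {P | SpanMem F B P}

/-- Smoothness of the projective hypersurface `F = 0`: over the algebraic closure there is
no nonzero common zero of `F` and all of its partial derivatives. -/
def IsSmoothHypersurf (F : MvPolynomial (Fin n) K) : Prop :=
  ∀ v : Fin n → AlgebraicClosure K,
    eval v (MvPolynomial.map (algebraMap K (AlgebraicClosure K)) F) = 0 →
    (∀ i, eval v (pderiv i (MvPolynomial.map (algebraMap K (AlgebraicClosure K)) F)) = 0) →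
    v = 0

/-- A smooth cubic hypersurface. -/
def SmoothCubic (F : MvPolynomial (Fin n) K) : Prop :=
  F.IsHomogeneous 3 ∧ IsSmoothHypersurf F

/-- The linear form cutting out the tangent plane `Π_P` of `F = 0` at `P`,
evaluated at the representative of a point `Q`; `Q ∈ Π_P` iff this vanishes. -/
def tangentEval (F : MvPolynomial (Fin n) K) (P Q : Projectivization K (Fin n → K)) : K :=
  ∑ i, eval P.rep (pderiv i F) * Q.rep i

/-- The set of `K`-points of the tangent plane `Π_P`. -/
def tangentPlanePts (F : MvPolynomial (Fin n) K) (P : Projectivization K (Fin n → K)) :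
    Set (Projectivization K (Fin n → K)) :=
  {Q | tangentEval F P Q = 0}

/-- The set of `K`-points of `Γ_P = S ∩ Π_P`. -/
def GammaPts (F : MvPolynomial (Fin n) K) (P : Projectivization K (Fin n → K)) :
    Set (Projectivization K (Fin n → K)) :=
  zeroSet F ∩ tangentPlanePts F P

/-! ### Base change along a field embedding -/

/-- Base change of a vector along a field embedding. -/
def clVec (φ : K →+* L) (v : Fin n → K) : Fin n → L := fun i => φ (v i)

lemma clVec_ne_zero (φ : K →+* L) {v : Fin n → K} (hv : v ≠ 0) : clVec φ v ≠ 0 := by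
  intro h
  apply hv
  funext i
  have := congrFun h i
  simpa [clVec] using φ.injective (by simpa [clVec] using this)

/-- Base change of a projective point along a field embedding. -/
def clPt (φ : K →+* L) (P : Projectivization K (Fin n → K)) :
    Projectivization L (Fin n → L) :=
  Projectivization.mk L (clVec φ P.rep) (clVec_ne_zero φ P.rep_nonzero)

lemma eval_smul_of_isHomogeneous {R : Type*} [CommSemiring R] {F : MvPolynomial (Fin n) R}
    {d : ℕ} (hF : F.IsHomogeneous d) (a : R) (w : Fin n → R) :
    eval (a • w) F = a ^ d * eval w F := by
  classical
  rw [eval_eq', eval_eq', Finset.mul_sum]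
  refine Finset.sum_congr rfl fun s hs => ?_
  have hdeg : ∑ i, s i = d := by
    have h1 := hF (MvPolynomial.mem_support_iff.mp hs)
    rw [Finsupp.weight_apply] at h1
    rw [← h1, Finsupp.sum_fintype]
    · simp
    · intro i; simp
  have key : ∀ i : Fin n, (a • w) i ^ s i = a ^ s i * w i ^ s i := by
    intro i; simp [mul_pow]
  rw [Finset.prod_congr rfl (fun i _ => key i), Finset.prod_mul_distrib,
    Finset.prod_pow_eq_pow_sum, hdeg]
  ring

lemma clVec_eval (φ : K →+* L) (F : MvPolynomial (Fin n) K) (v : Fin n → K) :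
    eval (clVec φ v) (MvPolynomial.map φ F) = φ (eval v F) := by
  rw [eval_map]
  have h : φ (eval v F) = φ (eval₂Hom (RingHom.id K) v F) := rfl
  rw [h, map_eval₂Hom]
  rfl

/-- A point given by a vector on which a homogeneous `F` vanishes lies in the zero set. -/
lemma mk_mem_zeroSet {F : MvPolynomial (Fin n) K} {d : ℕ} (hF : F.IsHomogeneous d)
    {v : Fin n → K} (hv : v ≠ 0) (h : eval v F = 0) :
    Projectivization.mk K v hv ∈ zeroSet F := by
  obtain ⟨a, ha⟩ := Projectivization.exists_smul_eq_mk_rep K v hv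
  show eval (Projectivization.mk K v hv).rep F = 0
  have hrep : (Projectivization.mk K v hv).rep = (a : K) • v := by
    rw [← ha, Units.smul_def]
  rw [hrep, eval_smul_of_isHomogeneous hF, h, mul_zero]

lemma clPt_mem_zeroSet (φ : K →+* L) {F : MvPolynomial (Fin n) K} {d : ℕ}
    (hF : F.IsHomogeneous d) {P : Projectivization K (Fin n → K)} (hP : P ∈ zeroSet F) :
    clPt φ P ∈ zeroSet (MvPolynomial.map φ F) := by
  apply mk_mem_zeroSet (hF.map φ)
  rw [clVec_eval, hP, map_zero]

/-- The induced map on points of `S` under base change of the field. -/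
def ptMap (φ : K →+* L) {F : MvPolynomial (Fin n) K} {d : ℕ} (hF : F.IsHomogeneous d)
    (P : zeroSet F) : zeroSet (MvPolynomial.map φ F) :=
  ⟨clPt φ P.1, clPt_mem_zeroSet φ hF P.2⟩

/-- A subspace of `L^n` is defined over `K` (w.r.t. `φ : K →+* L`) if it is spanned by
the base change of a `K`-subspace. -/
def DefinedOver (φ : K →+* L) (W : Submodule L (Fin n → L)) : Prop :=
  ∃ W₀ : Submodule K (Fin n → K), W = Submodule.span L (clVec φ '' (W₀ : Set (Fin n → K)))

/-! ### Asymptotic lines, parabolic points, Eckardt points -/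

/-- The line `W` is asymptotic to `F = 0` at `P`: the intersection multiplicity
`(ℓ · S)_P` is at least 3. -/
def AsymptoticAt (F : MvPolynomial (Fin n) K) (W : Submodule K (Fin n → K))
    (P : Projectivization K (Fin n → K)) : Prop :=
  IsLine W ∧ P.rep ∈ W ∧
    ∃ v ∈ W, LinearIndependent K ![P.rep, v] ∧
      ∃ c : K, lineRestrict F P.rep v = C c * (X 1) ^ 3

/-- The set of asymptotic lines at `P`. -/
def AsymSet (F : MvPolynomial (Fin n) K) (P : Projectivization K (Fin n → K)) :
    Set (Submodule K (Fin n → K)) :=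
  {W | AsymptoticAt F W P}

/-- A point of a hypersurface is parabolic (relative to the given field) if it does
not have exactly two distinct asymptotic lines (i.e. it has one or infinitely many). -/
def ParabolicAt (F : MvPolynomial (Fin n) K) (P : Projectivization K (Fin n → K)) : Prop :=
  ¬ ∃ W₁ W₂ : Submodule K (Fin n → K), W₁ ≠ W₂ ∧ AsymSet F P = {W₁, W₂}

/-- An Eckardt point (relative to the given field): three distinct lines lying on the
surface pass through `P`. -/
def EckardtAt (F : MvPolynomial (Fin n) K) (P : Projectivization K (Fin n → K)) : Prop :=
  ∃ W₁ W₂ W₃ : Submodule K (Fin n → K), W₁ ≠ W₂ ∧ W₁ ≠ W₃ ∧ W₂ ≠ W₃ ∧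
    (∀ W ∈ ({W₁, W₂, W₃} : Set (Submodule K (Fin n → K))),
      IsLine W ∧ LineOnSurf F W ∧ OnLine W P)

section geometric

variable (F : MvPolynomial (Fin n) K)

/-- `F` base changed to the algebraic closure of `K`. -/
def clF : MvPolynomial (Fin n) (AlgebraicClosure K) :=
  MvPolynomial.map (algebraMap K (AlgebraicClosure K)) F

/-- A `K`-point of `S` is parabolic (a geometric notion, checked over `K̄`). -/
def IsParabolic (P : Projectivization K (Fin n → K)) : Prop :=
  ParabolicAt (clF F) (clPt (algebraMap K (AlgebraicClosure K)) P)

/-- A `K`-point of `S` is an Eckardt point (a geometric notion, checked over `K̄`). -/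
def IsEckardt (P : Projectivization K (Fin n → K)) : Prop :=
  EckardtAt (clF F) (clPt (algebraMap K (AlgebraicClosure K)) P)

/-- A `K`-point of `S` is `K`-hyperbolic: it has exactly two asymptotic lines over `K̄`,
and both are defined over `K`. -/
def IsHyperbolic (P : Projectivization K (Fin n → K)) : Prop :=
  ∃ W₁ W₂, W₁ ≠ W₂ ∧
    AsymSet (clF F) (clPt (algebraMap K (AlgebraicClosure K)) P) = {W₁, W₂} ∧
    DefinedOver (algebraMap K (AlgebraicClosure K)) W₁ ∧
    DefinedOver (algebraMap K (AlgebraicClosure K)) W₂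

/-- A `K`-point of `S` is `K`-ternary: at least one of the asymptotic lines of `S`
through `P` is defined over `K`. -/
def IsTernary (P : Projectivization K (Fin n → K)) : Prop :=
  ∃ W ∈ AsymSet (clF F) (clPt (algebraMap K (AlgebraicClosure K)) P),
    DefinedOver (algebraMap K (AlgebraicClosure K)) W

end geometric

/-! ### The group `H_S(K)` -/

variable (F : MvPolynomial (Fin n) K)

/-- `G_S(K)`: the free abelian group on the set `S(K)`. -/
abbrev GS := FreeAbelianGroup (zeroSet F)

/-- The degree homomorphism `G_S(K) → ℤ`, `Σ aᵢ Pᵢ ↦ Σ aᵢ`. -/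
def degHom : GS F →+ ℤ := FreeAbelianGroup.lift fun _ => (1 : ℤ)

/-- `P + Q + R` is a "three point sum": either cut out on `S` with multiplicity by a
`K`-line not contained in `S`, or `P`, `Q`, `R` all lie on a `K`-line contained in `S`. -/
def TripleRel (P Q R : zeroSet F) : Prop :=
  ∃ W : Submodule K (Fin n → K), IsLine W ∧
    ((¬ LineOnSurf F W ∧ MeetsIn F W P.1 Q.1 R.1) ∨
      (LineOnSurf F W ∧ OnLine W P.1 ∧ OnLine W Q.1 ∧ OnLine W R.1))

/-- `G'_S(K)`: the subgroup generated by all three point sums. -/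
def Gp : AddSubgroup (GS F) :=
  AddSubgroup.closure {x | ∃ P Q R : zeroSet F, TripleRel F P Q R ∧
    x = FreeAbelianGroup.of P + FreeAbelianGroup.of Q + FreeAbelianGroup.of R}

/-- `G''_S(K)`: the degree-0 part of `G'_S(K)`. -/
def Gpp : AddSubgroup (GS F) := Gp F ⊓ (degHom F).ker

/-- `H_S(K) = G_S(K)/G''_S(K)`. -/
abbrev HS := GS F ⧸ Gpp F

/-- The class `[P] ∈ H_S(K)` of a point `P ∈ S(K)`. -/
def HClass (P : zeroSet F) : HS F := QuotientAddGroup.mk' (Gpp F) (FreeAbelianGroup.of P)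

/-- The degree homomorphism `H_S(K) → ℤ`. -/
def HdegHom : HS F →+ ℤ :=
  QuotientAddGroup.lift (Gpp F) (degHom F) (fun _ hx => hx.2)

/-- `H⁰_S(K)`: the degree-0 part of `H_S(K)`. -/
def H0 : AddSubgroup (HS F) := (HdegHom F).ker

@[simp] lemma HdegHom_HClass (P : zeroSet F) : HdegHom F (HClass F P) = 1 := by
  simp [HdegHom, HClass, degHom]

/-- The class `[P] - [Q]`, as an element of `H⁰_S(K)`. -/
def H0diff (P Q : zeroSet F) : H0 F :=
  ⟨HClass F P - HClass F Q, by simp [H0, AddMonoidHom.mem_ker, map_sub]⟩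

/-! ### mod-`p` dimensions and torsion -/

/-- `A/pA` for an abelian group `A`. -/
abbrev ModP (p : ℕ) (A : Type*) [AddCommGroup A] : Type _ :=
  A ⧸ (AddMonoidHom.range (nsmulAddMonoidHom p : A →+ A))

instance ModP.instModule (p : ℕ) (A : Type*) [AddCommGroup A] : Module (ZMod p) (ModP p A) :=
  QuotientAddGroup.zmodModule (fun x => ⟨x, rfl⟩)

/-- `dim_{F_p} A/pA`. -/
def dimModP (p : ℕ) (A : Type*) [AddCommGroup A] : Cardinal := Module.rank (ZMod p) (ModP p A)

/-- The `k`-torsion subgroup `A[k]` of an abelian group `A`. -/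
def torsion (k : ℕ) (A : Type*) [AddCommGroup A] : AddSubgroup A :=
  (nsmulAddMonoidHom k : A →+ A).ker

instance torsion.instModule (k : ℕ) (A : Type*) [AddCommGroup A] :
    Module (ZMod k) (torsion k A) :=
  AddCommGroup.zmodModule (fun x => Subtype.ext x.2)

/-- `dim_{F_k} A[k]`: the dimension of the `k`-torsion subgroup (for `k` prime). -/
def dimTorsion (k : ℕ) (A : Type*) [AddCommGroup A] : Cardinal :=
  Module.rank (ZMod k) (torsion k A)

/-! ### Topologies -/

/-- The quotient topology on projective space induced by the topology of `K`. -/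
def projTop (K : Type*) [Field K] [TopologicalSpace K] (n : ℕ) :
    TopologicalSpace (Projectivization K (Fin n → K)) :=
  TopologicalSpace.coinduced
    (fun v : {v : Fin n → K // v ≠ 0} => Projectivization.mk K v.1 v.2) inferInstance

/-- The induced topology on the set of `K`-points of `S`. -/
def surfTop (F : MvPolynomial (Fin n) K) [TopologicalSpace K] :
    TopologicalSpace (zeroSet F) :=
  TopologicalSpace.induced Subtype.val (projTop K n)

/-- `K` (a topological field) is a local field: it is isomorphic, as a topological field,
to `ℝ`, to `ℂ`, or to a finite extension of `ℚ_p` for some prime `p` (with its canonical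
topology, namely the `ℚ_p`-vector space topology). -/
def IsLocalField (K : Type*) [Field K] [TopologicalSpace K] : Prop :=
  (∃ e : K ≃+* ℝ, IsHomeomorph e) ∨ (∃ e : K ≃+* ℂ, IsHomeomorph e) ∨
    (∃ (p : ℕ), p.Prime ∧ ∃ (_ : Fact p.Prime) (f : ℚ_[p] →+* K) (m : ℕ)
      (e : K ≃+ (Fin m → ℚ_[p])),
      (∀ (c : ℚ_[p]) (x : K), e (f c * x) = c • e x) ∧ IsHomeomorph e)

end CubicSurf

/-!
Let `T` be the symmetric trilinear form with `T v v v = F v`. If the tangent plane at `P` contains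
a point `Y ≠ P` of `S`, then the line `PY` lies on `S` or meets it in `2P + Y`, so `2[P] + [Y]` does
not depend on `Y`. Two such steps, from a fixed `P` to `Y` and from `Y` to `X`, give points `X` with
the same class.

To see that these `X` fill an open set, choose `P` with nonzero second fundamental form; if a given
point of `S` is flat, then a suitable nearby one is not. The tangent plane section at `P` is then
parametrized by polynomials as a curve `Q` that is not constant in projective space. As `S` is
smooth, the Gauss map is not constant along `Q`, which provides a point `X` of `S` in the tangent
plane at some `Q t` at which that plane moves transversally to `X`. By the implicit function theorem
every point near `X` lies in the tangent plane at `Q s` for some `s` near `t`.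
-/

namespace CubicSurf

open Topology

section LocalFields

variable {K : Type*} [Field K] [topK : TopologicalSpace K]

lemma exists_nontriviallyNormedField_of_ringEquiv {L : Type*} [NontriviallyNormedField L]
    [CompleteSpace L] [CharZero L] (e : K ≃+* L) (he : IsHomeomorph e) :
    ∃ i : NontriviallyNormedField K, i.toField = ‹Field K› ∧
      i.toMetricSpace.toPseudoMetricSpace.toUniformSpace.toTopologicalSpace = topK ∧
      @CompleteSpace K i.toMetricSpace.toPseudoMetricSpace.toUniformSpace ∧ CharZero K := by
  obtain ⟨x, hx⟩ := NormedField.exists_one_lt_norm L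
  let i : NontriviallyNormedField K :=
    { NormedField.induced K L e e.injective with
      non_trivial := ⟨e.symm x, show 1 < ‖e (e.symm x)‖ by rwa [e.apply_symm_apply]⟩ }
  refine ⟨i, rfl, he.isInducing.eq_induced.symm, ?_, (e : K →+* L).charZero⟩
  have huniform : @IsUniformInducing K L i.toMetricSpace.toPseudoMetricSpace.toUniformSpace _ e :=
    @IsUniformInducing.mk K L i.toMetricSpace.toPseudoMetricSpace.toUniformSpace _ e rfl
  exact (@completeSpace_congr K L i.toMetricSpace.toPseudoMetricSpace.toUniformSpace _ e.toEquiv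
    huniform.isUniformEmbedding).2 ‹_›

lemma exists_nontriviallyNormedField_of_finiteDimensional_padic {p : ℕ} [Fact p.Prime]
    [Algebra ℚ_[p] K] {m : ℕ} (e : K ≃ₗ[ℚ_[p]] (Fin m → ℚ_[p])) (he : IsHomeomorph e) :
    ∃ i : NontriviallyNormedField K, i.toField = ‹Field K› ∧
      i.toMetricSpace.toPseudoMetricSpace.toUniformSpace.toTopologicalSpace = topK ∧
      @CompleteSpace K i.toMetricSpace.toPseudoMetricSpace.toUniformSpace ∧ CharZero K := by
  have hinduced := he.isInducing.eq_induced
  have : FiniteDimensional ℚ_[p] K := e.symm.finiteDimensional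
  let i := spectralNorm.nontriviallyNormedField ℚ_[p] K
  let : NormedSpace ℚ_[p] K := spectralNorm.normedSpace ℚ_[p] K
  let normTopology := i.toMetricSpace.toPseudoMetricSpace.toUniformSpace.toTopologicalSpace
  refine ⟨i, rfl, ?_, spectralNorm.completeSpace ℚ_[p] K,
    charZero_of_injective_algebraMap (algebraMap ℚ_[p] K).injective⟩
  exact e.toContinuousLinearEquiv.toHomeomorph.isInducing.eq_induced.trans hinduced.symm

lemma IsLocalField.exists_nontriviallyNormedField (hK : IsLocalField K) :
    ∃ i : NontriviallyNormedField K, i.toField = ‹Field K› ∧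
      i.toMetricSpace.toPseudoMetricSpace.toUniformSpace.toTopologicalSpace = topK ∧
      @CompleteSpace K i.toMetricSpace.toPseudoMetricSpace.toUniformSpace ∧ CharZero K := by
  rcases hK with ⟨e, he⟩ | ⟨e, he⟩ | ⟨p, -, _, f, m, e, hlinear, he⟩
  · exact exists_nontriviallyNormedField_of_ringEquiv e he
  · exact exists_nontriviallyNormedField_of_ringEquiv e he
  · let : Algebra ℚ_[p] K := f.toAlgebra
    exact exists_nontriviallyNormedField_of_finiteDimensional_padic (e.toLinearEquiv hlinear) he

end LocalFields

section ImplicitFunction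

variable {K E : Type*} [NontriviallyNormedField K] [CompleteSpace K]
  [NormedAddCommGroup E] [NormedSpace K E] [CompleteSpace E]

lemma eventually_exists_root_of_hasStrictFDerivAt {f : E × K → K} {f' : E × K →L[K] K} {a : E}
    {t c : K} (hf : HasStrictFDerivAt f f' (a, t)) (hroot : f (a, t) = 0)
    (hderiv : HasDerivAt (fun s => f (a, s)) c t) (hc : c ≠ 0) {P : E × K → Prop}
    (hP : ∀ᶠ y in 𝓝 (a, t), P y) : ∀ᶠ x in 𝓝 a, ∃ s, f (x, s) = 0 ∧ P (x, s) := by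
  have hpartial : f' ∘L .inr K E K = .toSpanSingleton K c := by
    ext
    simpa using (hf.hasFDerivAt.comp_hasDerivAt t
      ((hasDerivAt_const t a).prodMk (hasDerivAt_id t))).unique hderiv
  have hinv : (f' ∘L .inr K E K).IsInvertible := by
    refine ⟨ContinuousLinearEquiv.unitsEquivAut K (Units.mk0 c hc), ?_⟩
    rw [hpartial]
    ext
    simp
  filter_upwards [hf.eventually_apply_implicitFunctionOfProdDomain hinv,
    (Filter.tendsto_id.prodMk_nhds (hf.tendsto_implicitFunctionOfProdDomain hinv)).eventually hP]
    with x hx hPx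
  exact ⟨_, hx.trans hroot, hPx⟩

end ImplicitFunction

section PolarForm

lemma pderiv_pderiv_comm {σ R : Type*} [CommRing R] (i j : σ) (F : MvPolynomial σ R) :
    pderiv i (pderiv j F) = pderiv j (pderiv i F) := by
  classical
  have hbracket : ⁅pderiv (R := R) i, pderiv j⁆ = (0 : Derivation R (MvPolynomial σ R) _) := by
    refine derivation_ext fun k => ?_
    rw [Derivation.commutator_apply]
    simp [pderiv_X, Pi.single_apply, apply_ite]
  simpa [Derivation.commutator_apply, sub_eq_zero] using congr($hbracket F)

lemma sum_mul_eval_pderiv {σ R : Type*} [CommSemiring R] [Fintype σ] {F : MvPolynomial σ R} {d : ℕ}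
    (hF : F.IsHomogeneous d) (v : σ → R) :
    ∑ i, v i * eval v (pderiv i F) = d * eval v F := by
  simpa using congr(eval v $hF.sum_X_mul_pderiv)

variable {K : Type*} [Field K] {n : ℕ} (F : MvPolynomial (Fin n) K)

/-- The symmetric trilinear form `T` with `T v v v = F v` attached to a cubic form `F` by
polarization. Its coefficients are the third partial derivatives of `F`, which are constants,
divided by `6`. -/
def polarForm : (Fin n → K) →ₗ[K] (Fin n → K) →ₗ[K] (Fin n → K) →ₗ[K] K :=
  (6 : K)⁻¹ • ∑ i, ∑ j, ∑ k, constantCoeff (pderiv k (pderiv j (pderiv i F))) •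
    (LinearMap.proj i).smulRight ((LinearMap.proj j).smulRight (LinearMap.proj k))

lemma polarForm_apply (u v w : Fin n → K) :
    polarForm F u v w =
      6⁻¹ * ∑ i, ∑ j, ∑ k,
        constantCoeff (pderiv k (pderiv j (pderiv i F))) * (u i * v j * w k) := by
  simp [polarForm, mul_assoc]

lemma polarForm_swap_left (u v w : Fin n → K) : polarForm F u v w = polarForm F v u w := by
  rw [polarForm_apply, polarForm_apply, Finset.sum_comm]
  congr! 4 with j _ i _ k _
  rw [pderiv_pderiv_comm j i, mul_comm (u i)]

lemma polarForm_swap_right (u v w : Fin n → K) : polarForm F u v w = polarForm F u w v := by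
  rw [polarForm_apply, polarForm_apply]
  congr! 2 with i _
  rw [Finset.sum_comm]
  congr! 2 with k _ j _
  rw [pderiv_pderiv_comm j k, mul_right_comm]

variable {F} [CharZero K]

lemma six_mul_polarForm (hF : F.IsHomogeneous 3) (u v w : Fin n → K) :
    6 * polarForm F u v w = ∑ i, ∑ j, eval u (pderiv j (pderiv i F)) * (v i * w j) := by
  have hthird (i j k : Fin n) : constantCoeff (pderiv k (pderiv j (pderiv i F))) =
      eval u (pderiv k (pderiv j (pderiv i F))) := by
    rw [totalDegree_eq_zero_iff_eq_C.1
      ((totalDegree_zero_iff_isHomogeneous _).2 hF.pderiv.pderiv.pderiv)]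
    simp
  have hsecond (i j : Fin n) : ∑ k, u k * eval u (pderiv k (pderiv j (pderiv i F))) =
      eval u (pderiv j (pderiv i F)) := by
    simpa using sum_mul_eval_pderiv hF.pderiv.pderiv u
  rw [polarForm_swap_left, polarForm_swap_right, polarForm_apply,
    mul_inv_cancel_left₀ (by norm_num)]
  simp only [hthird, ← hsecond, Finset.sum_mul]
  congr! 3
  ring

lemma three_mul_polarForm_self_self (hF : F.IsHomogeneous 3) (v w : Fin n → K) :
    3 * polarForm F v v w = ∑ i, eval v (pderiv i F) * w i := by
  have hfirst (i : Fin n) : ∑ j, v j * eval v (pderiv j (pderiv i F)) =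
      2 * eval v (pderiv i F) := by
    simpa using sum_mul_eval_pderiv hF.pderiv v
  refine mul_left_cancel₀ (two_ne_zero : (2 : K) ≠ 0) ?_
  calc 2 * (3 * polarForm F v v w)
      = ∑ i, (∑ j, v j * eval v (pderiv j (pderiv i F))) * w i := by
        rw [← mul_assoc, show (2 : K) * 3 = 6 by norm_num, polarForm_swap_right,
          six_mul_polarForm hF]
        simp only [Finset.sum_mul]
        congr! 2
        ring
    _ = 2 * ∑ i, eval v (pderiv i F) * w i := by simp [hfirst, Finset.mul_sum, mul_assoc]

lemma polarForm_self_self_self (hF : F.IsHomogeneous 3) (v : Fin n → K) :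
    polarForm F v v v = eval v F := by
  refine mul_left_cancel₀ (three_ne_zero : (3 : K) ≠ 0) ?_
  rw [three_mul_polarForm_self_self hF]
  simpa [mul_comm] using sum_mul_eval_pderiv hF v

lemma eval_pderiv_eq_polarForm (hF : F.IsHomogeneous 3) (v : Fin n → K) (k : Fin n) :
    eval v (pderiv k F) = 3 * polarForm F v v (Pi.single k 1) := by
  simp [three_mul_polarForm_self_self hF, Pi.single_apply]

lemma eval_smul_add_smul (hF : F.IsHomogeneous 3) (u v : Fin n → K) (a b : K) :
    eval (a • u + b • v) F = a ^ 3 * eval u F + 3 * a ^ 2 * b * polarForm F u u v +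
      3 * a * b ^ 2 * polarForm F u v v + b ^ 3 * eval v F := by
  simp only [← polarForm_self_self_self hF, map_add, map_smul, LinearMap.add_apply,
    LinearMap.smul_apply, smul_eq_mul, polarForm_swap_left F v u,
    polarForm_swap_right F v v u, polarForm_swap_right F u v u]
  ring

end PolarForm

section PolynomialCurve

open scoped Polynomial
open Polynomial (derivative wronskian)

variable {K ι : Type*} [Field K]

/-- The point at time `t` of the polynomial curve `Q`. -/
def evalAt (Q : ι → K[X]) (t : K) : ι → K := fun i => (Q i).eval t

/-- The polynomial curve `Q` is constant as a map to projective space: `Q` is a fixed vector `c`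
scaled by a polynomial. -/
def IsProjConst (Q : ι → K[X]) : Prop :=
  ∃ (c : ι → K) (g : K[X]), ∀ i, Q i = Polynomial.C (c i) * g

/-- The affine line through `e` with direction `f`, as a polynomial curve. -/
def lineCurve (e f : ι → K) (i : ι) : K[X] := Polynomial.C (e i) + Polynomial.C (f i) * .X

lemma evalAt_lineCurve (e f : ι → K) (t : K) : evalAt (lineCurve e f) t = t • f + e := by
  ext i
  simp [lineCurve, evalAt, add_comm, mul_comm t]

lemma eval_aeval_curve (Q : ι → K[X]) (t : K) (G : MvPolynomial ι K) :
    (aeval Q G).eval t = eval (evalAt Q t) G := by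
  rw [← Polynomial.coe_aeval_eq_eval, comp_aeval_apply, ← coe_aeval_eq_eval]
  rfl

open scoped Classical in
lemma coeff_aeval_of_isHomogeneous {Q : ι → K[X]} {N e : ℕ} (hQ : ∀ i, (Q i).natDegree ≤ N)
    {G : MvPolynomial ι K} (hG : G.IsHomogeneous e) :
    (aeval Q G).coeff (e * N) = eval (fun i => (Q i).coeff N) G := by
  rw [aeval_def, eval₂_eq, eval_eq, Polynomial.finsetSum_coeff]
  refine Finset.sum_congr rfl fun s hs => ?_
  have hmultiset {R : Type _} [CommSemiring R] (f : ι → R) :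
      ∏ i ∈ s.support, f i ^ s i = (s.toMultiset.map f).prod := by
    simp [Finset.prod_multiset_map_count]
  have hcard : s.toMultiset.card = e := by
    rw [Finsupp.card_toMultiset, ← hG (mem_support_iff.1 hs), Finsupp.weight_apply]
    simp [Finsupp.sum]
  rw [hmultiset, Polynomial.algebraMap_eq, Polynomial.coeff_C_mul, ← hcard,
    ← Multiset.card_map Q, Polynomial.coeff_multiset_prod_of_natDegree_le _ _
      (by simpa using fun i _ => hQ i), Multiset.map_map, hmultiset]
  rfl

lemma derivative_aeval [Fintype ι] (Q : ι → K[X]) (G : MvPolynomial ι K) :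
    derivative (aeval Q G) = ∑ i, aeval Q (pderiv i G) * derivative (Q i) := by
  classical
  induction G using MvPolynomial.induction_on with
  | C a => simp
  | add G H hG hH => simp [hG, hH, add_mul, Finset.sum_add_distrib]
  | mul_X G i hG =>
    simp only [Derivation.leibniz, map_add, map_mul, smul_eq_mul, aeval_X, pderiv_X,
      Pi.single_apply, Polynomial.derivative_mul, hG, add_mul, Finset.sum_add_distrib,
      Finset.sum_mul]
    simp [mul_right_comm, mul_comm (Q i), add_comm]

lemma wronskian_mul_mul (a p q : K[X]) :
    wronskian (a * p) (a * q) = a ^ 2 * wronskian p q := by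
  simp only [wronskian, Polynomial.derivative_mul]
  ring

lemma exists_eq_mul_and_sum_mul_eq_one {R : Type*} [CommRing R] [IsDomain R]
    [IsPrincipalIdealRing R] [Fintype ι] {Q : ι → R} (hQ : Q ≠ 0) :
    ∃ g ≠ 0, ∃ Q' r : ι → R, (∀ i, Q i = g * Q' i) ∧ ∑ i, r i * Q' i = 1 := by
  obtain ⟨g, hg : Ideal.span (Set.range Q) = Ideal.span {g}⟩ :=
    IsPrincipalIdealRing.principal (Ideal.span (Set.range Q))
  have hdvd (i : ι) : g ∣ Q i := by
    rw [← Ideal.mem_span_singleton, ← hg]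
    exact Ideal.subset_span ⟨i, rfl⟩
  choose Q' hQ' using hdvd
  have hg0 : g ≠ 0 := by
    rintro rfl
    exact hQ (funext fun i => by simp [hQ'])
  obtain ⟨r, hr⟩ := Ideal.mem_span_range_iff_exists_fun.1
    (hg ▸ Ideal.mem_span_singleton_self g : g ∈ Ideal.span (Set.range Q))
  refine ⟨g, hg0, Q', r, hQ', mul_left_cancel₀ hg0 ?_⟩
  rw [mul_one, Finset.mul_sum]
  simpa [hQ', mul_left_comm] using hr

lemma exists_eq_C_mul_of_wronskian_eq_zero [CharZero K] {p q : K[X]} (hp : p ≠ 0)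
    (h : wronskian p q = 0) : ∃ c, q = Polynomial.C c * p := by
  obtain ⟨g, hg, Q, r, hQ, hr⟩ := exists_eq_mul_and_sum_mul_eq_one (Q := ![p, q])
    fun h => hp (congrFun h 0)
  obtain rfl : p = g * Q 0 := hQ 0
  obtain rfl : q = g * Q 1 := hQ 1
  rw [wronskian_mul_mul, mul_eq_zero_iff_left (pow_ne_zero 2 hg),
    IsCoprime.wronskian_eq_zero_iff ⟨r 0, r 1, by simpa using hr⟩, Polynomial.derivative_eq_zero,
    Polynomial.derivative_eq_zero, Polynomial.natDegree_eq_zero, Polynomial.natDegree_eq_zero] at h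
  obtain ⟨⟨a, ha⟩, b, hb⟩ := h
  have ha0 : a ≠ 0 := by
    rintro rfl
    simp [← ha] at hp
  refine ⟨b / a, ?_⟩
  rw [← ha, ← hb, mul_left_comm, ← Polynomial.C_mul, div_mul_cancel₀ b ha0]

lemma isProjConst_iff_wronskian [CharZero K] {Q : ι → K[X]} :
    IsProjConst Q ↔ ∀ i j, wronskian (Q i) (Q j) = 0 := by
  constructor
  · rintro ⟨c, g, hQ⟩ i j
    rw [hQ, hQ, mul_comm, mul_comm _ g, wronskian_mul_mul]
    simp [wronskian]
  · intro h
    by_cases hzero : ∀ i, Q i = 0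
    · exact ⟨0, 0, by simpa using hzero⟩
    · push Not at hzero
      obtain ⟨i, hi⟩ := hzero
      choose c hc using fun j => exists_eq_C_mul_of_wronskian_eq_zero hi (h i j)
      exact ⟨c, Q i, hc⟩

lemma IsProjConst.of_mul [CharZero K] {Q : ι → K[X]} {a : K[X]} (ha : a ≠ 0)
    (h : IsProjConst fun i => a * Q i) : IsProjConst Q := by
  simpa [isProjConst_iff_wronskian, wronskian_mul_mul, ha] using h

lemma IsProjConst.not_linearIndependent_evalAt {Q : ι → K[X]} (hQ : IsProjConst Q) (s t : K) :
    ¬ LinearIndependent K ![evalAt Q s, evalAt Q t] := by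
  obtain ⟨c, g, hQ⟩ := hQ
  have heval (r : K) : evalAt Q r = g.eval r • c := by
    ext i
    simp [evalAt, hQ, mul_comm]
  intro h
  have hs : g.eval s ≠ 0 := fun hs => h.ne_zero 0 (by simp [heval, hs])
  rw [LinearIndependent.pair_iff] at h
  exact hs (neg_eq_zero.1 (h (g.eval t) (-g.eval s) (by simp [heval, smul_smul, mul_comm])).2)

end PolynomialCurve

section Smoothness

variable {K : Type*} [Field K] {n d : ℕ} {F : MvPolynomial (Fin n) K}

lemma IsSmoothHypersurf.eq_zero_of_aeval_pderiv (hF : F.IsHomogeneous d) (hd : (d : K) ≠ 0)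
    (hsmooth : IsSmoothHypersurf F) {v : Fin n → AlgebraicClosure K}
    (hv : ∀ i, aeval v (pderiv i F) = 0) : v = 0 := by
  have hv' (i : Fin n) : eval v (pderiv i (map (algebraMap K (AlgebraicClosure K)) F)) = 0 := by
    rw [pderiv_map, eval_map, ← aeval_def, hv]
  refine hsmooth v (mul_left_cancel₀
    ((map_ne_zero (algebraMap K (AlgebraicClosure K))).2 hd) ?_) hv'
  rw [map_natCast, ← sum_mul_eval_pderiv (hF.map _)]
  simp [hv']

lemma IsSmoothHypersurf.eq_zero_of_eval_pderiv (hF : F.IsHomogeneous d) (hd : (d : K) ≠ 0)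
    (hsmooth : IsSmoothHypersurf F) {v : Fin n → K} (hv : ∀ i, eval v (pderiv i F) = 0) :
    v = 0 := by
  have hbase := hsmooth.eq_zero_of_aeval_pderiv hF hd
    (v := algebraMap K (AlgebraicClosure K) ∘ v)
    fun i => by simpa [hv] using aeval_algebraMap_apply (AlgebraicClosure K) v (pderiv i F)
  ext i
  simpa using congrFun hbase i

end Smoothness

section GaussMap

open scoped Polynomial

variable {K : Type*} [Field K] {n d : ℕ} {F : MvPolynomial (Fin n) K}

/-- The composite of the curve `Q` with the Gauss map of `F = 0`, which sends a point to the
coefficient vector of its tangent hyperplane. -/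
def gaussCurve {ι : Type*} (F : MvPolynomial ι K) (Q : ι → K[X]) (i : ι) : K[X] :=
  aeval Q (pderiv i F)

lemma gaussCurve_mul (hF : F.IsHomogeneous d) (g : K[X]) (Q : Fin n → K[X]) (i : Fin n) :
    gaussCurve F (fun j => g * Q j) i = g ^ (d - 1) * gaussCurve F Q i := by
  have := eval_smul_of_isHomogeneous ((hF.pderiv (i := i)).map Polynomial.C) g Q
  simpa [eval_map, gaussCurve, aeval_def, Pi.smul_def] using this

/-- Otherwise the vector of top coefficients of `Q`, its point at infinity, would be singular. -/
lemma IsSmoothHypersurf.natDegree_eq_zero_of_gaussCurve (hF : F.IsHomogeneous d) (hd : 2 ≤ d)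
    (hd0 : (d : K) ≠ 0) (hsmooth : IsSmoothHypersurf F) {Q : Fin n → K[X]}
    (hgauss : ∀ i, (gaussCurve F Q i).natDegree = 0) (j : Fin n) : (Q j).natDegree = 0 := by
  obtain ⟨m, -, hm⟩ := Finset.exists_max_image Finset.univ (fun k => (Q k).natDegree) ⟨j, by simp⟩
  suffices h : (Q m).natDegree = 0 from Nat.le_zero.1 (h ▸ hm j (Finset.mem_univ j))
  by_contra hpos
  have htop : (fun k => (Q k).coeff (Q m).natDegree) = 0 := by
    refine hsmooth.eq_zero_of_eval_pderiv hF hd0 fun i => ?_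
    rw [← coeff_aeval_of_isHomogeneous (fun k => hm k (Finset.mem_univ k)) hF.pderiv]
    refine Polynomial.coeff_eq_zero_of_natDegree_lt ?_
    rw [← gaussCurve, hgauss]
    exact Nat.mul_pos (by omega) (Nat.pos_of_ne_zero hpos)
  rw [Polynomial.leadingCoeff_eq_zero.1 (congrFun htop m)] at hpos
  simp at hpos

lemma IsSmoothHypersurf.isProjConst_of_gaussCurve_of_sum_mul_eq_one (hF : F.IsHomogeneous d)
    (hd : 2 ≤ d) (hd0 : (d : K) ≠ 0) (hsmooth : IsSmoothHypersurf F) {Q r : Fin n → K[X]}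
    (hr : ∑ j, r j * Q j = 1) (hgauss : IsProjConst (gaussCurve F Q)) : IsProjConst Q := by
  obtain ⟨c, h, hh⟩ := hgauss
  have hconst : h.natDegree = 0 := by
    by_contra hdeg
    obtain ⟨ρ, hρ⟩ := IsAlgClosed.exists_aeval_eq_zero (AlgebraicClosure K) h
      (mt Polynomial.natDegree_eq_of_degree_eq_some hdeg)
    have hzero := hsmooth.eq_zero_of_aeval_pderiv hF hd0 (v := fun j => Polynomial.aeval ρ (Q j))
      fun i => by rw [← comp_aeval_apply, ← gaussCurve, hh, map_mul, hρ, mul_zero]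
    simpa [congrFun hzero _] using congr(Polynomial.aeval ρ $hr)
  have hQ := hsmooth.natDegree_eq_zero_of_gaussCurve hF hd hd0 (Q := Q)
    fun i => by simpa [hh, hconst] using Polynomial.natDegree_C_mul_le (c i) h
  exact ⟨fun j => (Q j).coeff 0, 1, fun j => by
    rw [mul_one, ← Polynomial.eq_C_of_natDegree_eq_zero (hQ j)]⟩

lemma IsSmoothHypersurf.isProjConst_of_gaussCurve [CharZero K] (hF : F.IsHomogeneous d)
    (hd : 2 ≤ d) (hsmooth : IsSmoothHypersurf F) {Q : Fin n → K[X]}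
    (hgauss : IsProjConst (gaussCurve F Q)) : IsProjConst Q := by
  by_cases hQ : Q = 0
  · exact ⟨0, 0, by simp [hQ]⟩
  obtain ⟨g, hg, Q', r, hQ', hr⟩ := exists_eq_mul_and_sum_mul_eq_one hQ
  obtain rfl : Q = fun i => g * Q' i := funext hQ'
  rw [funext (gaussCurve_mul hF g Q')] at hgauss
  obtain ⟨c, h, hh⟩ := hsmooth.isProjConst_of_gaussCurve_of_sum_mul_eq_one hF hd
    (by exact_mod_cast (by omega : d ≠ 0)) hr (hgauss.of_mul (pow_ne_zero _ hg))
  exact ⟨c, g * h, fun i => by simp only [hh, mul_left_comm]⟩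

/-- The pairing of the tangent hyperplanes along the curve `Q` with the vector `m`. Its roots are
the times at which the tangent hyperplane passes through `m`. -/
def polarCurve {ι : Type*} [Fintype ι] (F : MvPolynomial ι K) (Q : ι → K[X]) (m : ι → K) : K[X] :=
  ∑ i, Polynomial.C (m i) * gaussCurve F Q i

section CharZero

variable {F : MvPolynomial (Fin n) K} [CharZero K]

lemma eval_gaussCurve (hF : F.IsHomogeneous 3) (Q : Fin n → K[X]) (i : Fin n) (t : K) :
    (gaussCurve F Q i).eval t = 3 * polarForm F (evalAt Q t) (evalAt Q t) (Pi.single i 1) := by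
  rw [gaussCurve, eval_aeval_curve, eval_pderiv_eq_polarForm hF]

lemma eval_derivative_gaussCurve (hF : F.IsHomogeneous 3) (Q : Fin n → K[X]) (i : Fin n) (t : K) :
    (gaussCurve F Q i).derivative.eval t =
      6 * polarForm F (evalAt Q t) (evalAt (Polynomial.derivative ∘ Q) t) (Pi.single i 1) := by
  rw [polarForm_swap_right, six_mul_polarForm hF, gaussCurve, derivative_aeval]
  simp [Polynomial.eval_finsetSum, eval_aeval_curve, Pi.single_apply, evalAt]

lemma eval_polarCurve (hF : F.IsHomogeneous 3) (Q : Fin n → K[X]) (m : Fin n → K) (t : K) :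
    (polarCurve F Q m).eval t = 3 * polarForm F (evalAt Q t) (evalAt Q t) m := by
  rw [three_mul_polarForm_self_self hF]
  simp [polarCurve, gaussCurve, Polynomial.eval_finsetSum, eval_aeval_curve, mul_comm]

lemma eval_derivative_polarCurve (hF : F.IsHomogeneous 3) (Q : Fin n → K[X]) (m : Fin n → K)
    (t : K) : (polarCurve F Q m).derivative.eval t =
      6 * polarForm F (evalAt Q t) (evalAt (Polynomial.derivative ∘ Q) t) m := by
  rw [polarForm_swap_right, six_mul_polarForm hF]
  simp [polarCurve, gaussCurve, Polynomial.eval_finsetSum, eval_aeval_curve, derivative_aeval,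
    evalAt, Finset.mul_sum, mul_left_comm]

lemma polarForm_derivative_eq_zero (hF : F.IsHomogeneous 3) {Q : Fin n → K[X]}
    (hQ : aeval Q F = 0) (t : K) :
    polarForm F (evalAt Q t) (evalAt Q t) (evalAt (Polynomial.derivative ∘ Q) t) = 0 := by
  refine mul_left_cancel₀ (three_ne_zero : (3 : K) ≠ 0) ?_
  rw [three_mul_polarForm_self_self hF]
  simpa [hQ, Polynomial.eval_finsetSum, eval_aeval_curve, evalAt] using
    congr(($(derivative_aeval Q F)).eval t).symm

end CharZero

end GaussMap

section TangentPairs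

variable {K : Type*} [Field K] {n : ℕ} {F : MvPolynomial (Fin n) K}

lemma eval_lineRestrict (F : MvPolynomial (Fin n) K) (u v : Fin n → K) (x : Fin 2 → K) :
    eval x (lineRestrict F u v) = eval (x 0 • u + x 1 • v) F := by
  rw [lineRestrict, ← coe_aeval_eq_eval, RingHom.coe_coe, comp_aeval_apply, ← coe_aeval_eq_eval,
    RingHom.coe_coe]
  congr! 2
  ext i
  simp [mul_comm]

lemma lineOnSurf_span_pair_iff [Infinite K] (u v : Fin n → K) :
    LineOnSurf F (Submodule.span K {u, v}) ↔ lineRestrict F u v = 0 := by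
  refine ⟨fun h => h u v (Submodule.mem_span_of_mem (by simp))
      (Submodule.mem_span_of_mem (by simp)),
    fun h a b ha hb => MvPolynomial.funext fun x => ?_⟩
  obtain ⟨s, t, hst⟩ := Submodule.mem_span_pair.1
    (add_mem (Submodule.smul_mem _ (x 0) ha) (Submodule.smul_mem _ (x 1) hb))
  simpa [eval_lineRestrict, hst] using congr(eval ![s, t] $h)

lemma onLine_mk {W : Submodule K (Fin n → K)} {u : Fin n → K} (hu : u ≠ 0) (h : u ∈ W) :
    OnLine W (Projectivization.mk K u hu) := by
  obtain ⟨a, ha⟩ := Projectivization.exists_smul_eq_mk_rep K u hu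
  rw [OnLine, ← ha]
  exact W.smul_mem _ h

lemma isLine_span_pair {u v : Fin n → K} (h : LinearIndependent K ![u, v]) :
    IsLine (Submodule.span K {u, v}) := by
  rw [IsLine, ← Matrix.range_cons_cons_empty u v ![], finrank_span_eq_card h, Fintype.card_fin]

lemma HClass_add_eq_of_tripleRel {P Q R P' Q' R' : zeroSet F} (h : TripleRel F P Q R)
    (h' : TripleRel F P' Q' R') :
    HClass F P + HClass F Q + HClass F R = HClass F P' + HClass F Q' + HClass F R' := by
  simp only [HClass, ← map_add]
  refine QuotientAddGroup.eq.2
    ⟨AddSubgroup.add_mem _ (AddSubgroup.neg_mem _ ?_) ?_, by simp [degHom]⟩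
  · exact AddSubgroup.subset_closure ⟨P, Q, R, h, rfl⟩
  · exact AddSubgroup.subset_closure ⟨P', Q', R', h', rfl⟩

/-- `u` and `v` represent distinct points of the cubic hypersurface `F = 0` whose line is tangent
at `u`: it either meets the hypersurface in `2u + v` or lies on it. -/
structure IsTangentPair (F : MvPolynomial (Fin n) K) (u v : Fin n → K) : Prop where
  linearIndependent : LinearIndependent K ![u, v]
  eval_left : eval u F = 0
  eval_right : eval v F = 0
  polarForm_eq_zero : polarForm F u u v = 0

lemma linearIndependent_pair_of_apply {u v : Fin n → K} (φ : (Fin n → K) →ₗ[K] K) (hφu : φ u = 0)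
    (hφv : φ v ≠ 0) (hu : u ≠ 0) : LinearIndependent K ![u, v] := by
  rw [LinearIndependent.pair_iff' hu]
  rintro a rfl
  simp [hφu] at hφv

/-- The third intersection point of the cubic hypersurface `F = 0` with the line through `q` and
`e`, when this line is tangent to the hypersurface at `q`. -/
def residual (F : MvPolynomial (Fin n) K) (q e : Fin n → K) : Fin n → K :=
  (3 * polarForm F q e e) • e - polarForm F e e e • q

variable [CharZero K] {u v : Fin n → K}

lemma IsTangentPair.lineRestrict_eq (hF : F.IsHomogeneous 3) (h : IsTangentPair F u v) :
    lineRestrict F u v = C (3 * polarForm F u v v) * X 0 * X 1 ^ 2 := by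
  refine MvPolynomial.funext fun x => ?_
  rw [eval_lineRestrict, eval_smul_add_smul hF, h.eval_left, h.eval_right, h.polarForm_eq_zero]
  simp
  ring

lemma IsTangentPair.tripleRel (hF : F.IsHomogeneous 3) (h : IsTangentPair F u v) {P Q : zeroSet F}
    {hu : u ≠ 0} {hv : v ≠ 0} (hP : P.1 = Projectivization.mk K u hu)
    (hQ : Q.1 = Projectivization.mk K v hv) : TripleRel F P P Q := by
  have huW : u ∈ Submodule.span K {u, v} := Submodule.mem_span_of_mem (by simp)
  have hvW : v ∈ Submodule.span K {u, v} := Submodule.mem_span_of_mem (by simp)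
  have hres := h.lineRestrict_eq hF
  refine ⟨_, isLine_span_pair h.linearIndependent, ?_⟩
  rw [lineOnSurf_span_pair_iff, hP, hQ]
  by_cases hc : polarForm F u v v = 0
  · exact .inr ⟨by simp [hres, hc], onLine_mk hu huW, onLine_mk hu huW, onLine_mk hv hvW⟩
  · refine .inl ⟨by simp [hres, hc], u, v, huW, hvW, h.linearIndependent,
      3 * polarForm F u v v, ![1, 1, 0], ![0, 0, 1], ?_, by simpa using hc, ?_, ?_, ?_, ?_⟩
    · simp [Fin.forall_fin_succ, hu, hv]
    · simp [hres, Fin.prod_univ_three]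
      ring
    all_goals simp

lemma HClass_eq_of_isTangentPair (hF : F.IsHomogeneous 3) {p y y' x x' : Fin n → K}
    (hpy : IsTangentPair F p y) (hyx : IsTangentPair F y x) (hpy' : IsTangentPair F p y')
    (hyx' : IsTangentPair F y' x') {X X' : zeroSet F} {hx : x ≠ 0} {hx' : x' ≠ 0}
    (hX : X.1 = Projectivization.mk K x hx) (hX' : X'.1 = Projectivization.mk K x' hx') :
    HClass F X = HClass F X' := by
  let P : zeroSet F := ⟨_, mk_mem_zeroSet hF (hpy.linearIndependent.ne_zero 0) hpy.eval_left⟩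
  let Y : zeroSet F := ⟨_, mk_mem_zeroSet hF (hyx.linearIndependent.ne_zero 0) hyx.eval_left⟩
  let Y' : zeroSet F := ⟨_, mk_mem_zeroSet hF (hyx'.linearIndependent.ne_zero 0) hyx'.eval_left⟩
  have hPY : TripleRel F P P Y := hpy.tripleRel hF rfl rfl
  have hPY' : TripleRel F P P Y' := hpy'.tripleRel hF rfl rfl
  have hYX : TripleRel F Y Y X := hyx.tripleRel hF rfl hX
  have hYX' : TripleRel F Y' Y' X' := hyx'.tripleRel hF rfl hX'
  have hY : HClass F Y = HClass F Y' := add_left_cancel (HClass_add_eq_of_tripleRel hPY hPY')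
  simpa [hY] using HClass_add_eq_of_tripleRel hYX hYX'

lemma eval_residual (hF : F.IsHomogeneous 3) {q e : Fin n → K} (hq : eval q F = 0)
    (hqe : polarForm F q q e = 0) : eval (residual F q e) F = 0 := by
  have hee : polarForm F e e q = polarForm F q e e := by
    rw [polarForm_swap_right, polarForm_swap_left]
  have hqeq : polarForm F q e q = 0 := by rwa [polarForm_swap_right]
  simp only [← polarForm_self_self_self hF] at hq ⊢
  simp only [residual, map_sub, map_smul, LinearMap.sub_apply, LinearMap.smul_apply, smul_eq_mul,
    hq, hqe, hqeq, hee, polarForm_swap_left F e q]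
  ring

lemma isTangentPair_residual (hF : F.IsHomogeneous 3) {q e : Fin n → K} (hq : eval q F = 0)
    (hqe : polarForm F q q e = 0) (hqee : polarForm F q e e ≠ 0) :
    IsTangentPair F q (residual F q e) := by
  have hφ : polarForm F q e q = 0 := by rwa [polarForm_swap_right]
  refine ⟨linearIndependent_pair_of_apply (polarForm F q e) hφ ?_ ?_, hq,
    eval_residual hF hq hqe, ?_⟩
  · simp [residual, hφ, hqee]
  · rintro rfl
    simp at hqee
  · simp [residual, hqe, polarForm_self_self_self hF, hq]

end TangentPairs

section SpecialDirections

variable {K : Type*} [Field K]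

lemma exists_ker_linearIndependent_cons {V : Type*} [AddCommGroup V] [Module K V]
    [FiniteDimensional K V] (l : V →ₗ[K] K) {m : ℕ} {v : Fin m → V} (hv : LinearIndependent K v)
    (hm : m + 1 < Module.finrank K V) :
    ∃ d, l d = 0 ∧ LinearIndependent K (Fin.cons d v : Fin (m + 1) → V) := by
  by_contra! hcon
  have hker : LinearMap.ker l ≤ Submodule.span K (Set.range v) := fun d hd => by
    by_contra hnot
    exact hcon d hd (linearIndependent_finCons.2 ⟨hv, hnot⟩)
  have hle := Submodule.finrank_mono hker
  have hrange := Submodule.finrank_le (LinearMap.range l)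
  rw [finrank_span_eq_card hv, Fintype.card_fin] at hle
  rw [Module.finrank_self] at hrange
  have := LinearMap.finrank_range_add_finrank_ker l
  omega

variable [CharZero K] {n : ℕ} {F : MvPolynomial (Fin n) K}

lemma SmoothCubic.exists_polarForm_eq_one (hF : SmoothCubic F) {p : Fin n → K} (hp : p ≠ 0) :
    ∃ m, polarForm F p p m = 1 := by
  obtain ⟨i, hi⟩ : ∃ i, polarForm F p p (Pi.single i 1) ≠ 0 := by
    by_contra! hcon
    refine hp (hF.2.eq_zero_of_eval_pderiv hF.1 (by norm_num) fun i => ?_)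
    rw [eval_pderiv_eq_polarForm hF.1, hcon, mul_zero]
  exact ⟨(polarForm F p p (Pi.single i 1))⁻¹ • Pi.single i 1, by simp [hi]⟩

lemma polarForm_self_left_eq_zero_of_forall (hF : F.IsHomogeneous 3) {W : Submodule K (Fin n → K)}
    (hW : ∀ v ∈ W, eval v F = 0) {u v : Fin n → K} (hu : u ∈ W) (hv : v ∈ W) :
    polarForm F u u v = 0 := by
  have hadd := eval_smul_add_smul hF u v 1 1
  have hsub := eval_smul_add_smul hF u v 1 (-1)
  rw [hW _ (add_mem (W.smul_mem _ hu) (W.smul_mem _ hv)), hW u hu, hW v hv] at hadd hsub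
  linear_combination (hsub - hadd) / 6

/-- If `F` vanished on the tangent hyperplane at `p`, the Gauss map would be constant on each of its
lines through `p`. -/
lemma SmoothCubic.exists_polarForm_eq_zero_and_eval_ne_zero (hn : 3 ≤ n) (hF : SmoothCubic F)
    {p : Fin n → K} (hp : p ≠ 0) (hpF : eval p F = 0) :
    ∃ d, polarForm F p p d = 0 ∧ eval d F ≠ 0 := by
  by_contra! hcon
  obtain ⟨m, hm⟩ := hF.exists_polarForm_eq_one hp
  obtain ⟨d, hd, hli⟩ := exists_ker_linearIndependent_cons (polarForm F p p)
    (v := ![p]) (by simpa using hp) (by simpa using Nat.lt_of_succ_le hn)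
  let Q := lineCurve p d
  have hQ (t : K) : evalAt Q t = t • d + p := evalAt_lineCurve p d t
  have hker (t : K) : evalAt Q t ∈ LinearMap.ker (polarForm F p p) := by
    simp [hQ, hd, polarForm_self_self_self hF.1, hpF]
  refine (hF.2.isProjConst_of_gaussCurve hF.1 (by norm_num) (Q := Q)
    ⟨fun i => polarForm F p p (Pi.single i 1), polarCurve F Q m,
      fun i => Polynomial.funext fun t => ?_⟩).not_linearIndependent_evalAt 1 0 ?_
  · have hz := polarForm_self_left_eq_zero_of_forall hF.1 (W := LinearMap.ker (polarForm F p p))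
      hcon (hker t) (v := Pi.single i 1 - polarForm F p p (Pi.single i 1) • m) (by simp [hm])
    rw [map_sub, map_smul, smul_eq_mul, sub_eq_zero] at hz
    rw [Polynomial.eval_mul, Polynomial.eval_C, eval_gaussCurve hF.1, eval_polarCurve hF.1, hz]
    ring
  · rw [hQ, hQ, zero_smul, zero_add, one_smul]
    exact LinearIndependent.pair_add_left_iff.2 hli

end SpecialDirections

section NonFlatPoints

variable {K : Type*} [NontriviallyNormedField K] {n : ℕ} {F : MvPolynomial (Fin n) K}

lemma analyticAt_polarForm {E : Type*} [NormedAddCommGroup E] [NormedSpace K E]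
    {u v w : E → Fin n → K} {x : E} (hu : AnalyticAt K u x) (hv : AnalyticAt K v x)
    (hw : AnalyticAt K w x) :
    AnalyticAt K (fun y => polarForm F (u y) (v y) (w y)) x := by
  simp only [polarForm_apply]
  rw [analyticAt_pi_iff] at hu hv hw
  fun_prop

lemma eventually_exists_add_sq_mul_eval_eq_zero [CompleteSpace K] [CharZero K]
    (F : MvPolynomial (Fin n) K) (d m : Fin n → K) {P : K × K → Prop}
    (hP : ∀ᶠ y in 𝓝 0, P y) :
    ∀ᶠ x in 𝓝 0, ∃ u, 3 * u + x ^ 2 * eval (d + u • m) F = 0 ∧ P (x, u) := by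
  have hline : AnalyticAt K (fun y : K × K => d + y.2 • m) 0 :=
    analyticAt_const.add (analyticAt_snd.smul analyticAt_const)
  have hf : AnalyticAt K (fun y : K × K => 3 * y.2 + y.1 ^ 2 * eval (d + y.2 • m) F) 0 :=
    (analyticAt_const.mul analyticAt_snd).add
      ((analyticAt_fst.pow 2).mul (AnalyticAt.aeval_mvPolynomial (analyticAt_pi_iff.1 hline) F))
  exact eventually_exists_root_of_hasStrictFDerivAt hf.hasStrictFDerivAt (by simp)
    (c := 3) (by simpa using (hasDerivAt_id (0 : K)).const_mul 3) three_ne_zero hP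

lemma eval_add_smul_of_polarForm_eq_zero [CharZero K] (hF : F.IsHomogeneous 3) {p z : Fin n → K}
    (hp : eval p F = 0) (hz : polarForm F p z z = 0) (x : K) :
    eval (p + x • z) F = x * (3 * polarForm F p p z + x ^ 2 * eval z F) := by
  have hexp := eval_smul_add_smul hF p z 1 x
  rw [one_smul, hp, hz] at hexp
  rw [hexp]
  ring

lemma exists_polarForm_ne_zero_of_flat [CompleteSpace K] [CharZero K] (hF : F.IsHomogeneous 3)
    {p d m : Fin n → K} (hp : eval p F = 0) (hd : eval d F ≠ 0) (hppd : polarForm F p p d = 0)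
    (hppm : polarForm F p p m = 1) (hpdd : polarForm F p d d = 0) (hpdm : polarForm F p d m = 0)
    (hpmm : polarForm F p m m = 0) :
    ∃ q e, eval q F = 0 ∧ polarForm F q q e = 0 ∧ polarForm F q e e ≠ 0 := by
  have hpmd : polarForm F p m d = 0 := by rwa [polarForm_swap_right]
  let z (y : K × K) : Fin n → K := d + y.2 • m
  let q (y : K × K) : Fin n → K := p + y.1 • z y
  let e (y : K × K) : Fin n → K := polarForm F (q y) (q y) m • d - polarForm F (q y) (q y) d • m
  have hz : AnalyticAt K z 0 := analyticAt_const.add (analyticAt_snd.smul analyticAt_const)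
  have hq : AnalyticAt K q 0 := analyticAt_const.add (analyticAt_fst.smul hz)
  have he : AnalyticAt K e 0 :=
    ((analyticAt_polarForm hq hq analyticAt_const).smul analyticAt_const).sub
      ((analyticAt_polarForm hq hq analyticAt_const).smul analyticAt_const)
  have hqF (y : K × K) : eval (q y) F = y.1 * (3 * y.2 + y.1 ^ 2 * eval (z y) F) := by
    have hppz : polarForm F p p (z y) = y.2 := by simp [z, hppd, hppm]
    have hpzz : polarForm F p (z y) (z y) = 0 := by simp [z, hpdd, hpdm, hpmd, hpmm]
    rw [eval_add_smul_of_polarForm_eq_zero hF hp hpzz, hppz]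
  have hqe (y : K × K) : polarForm F (q y) (q y) (e y) = 0 := by simp [e, mul_comm]
  -- As `y → 0` both `z y` and `e y` tend to `d`, so `T q e e` behaves like `y.1 * F d`.
  have hqee (y : K × K) : polarForm F (q y) (e y) (e y) = y.1 * polarForm F (z y) (e y) (e y) := by
    have hpe : polarForm F p (e y) (e y) = 0 := by simp [e, hpdd, hpdm, hpmd, hpmm]
    simp [q, hpe]
  have hz0 : z 0 = d := by simp [z]
  have he0 : e 0 = d := by simp [e, q, hppm, hppd]
  have hne : ∀ᶠ y in 𝓝 (0 : K × K), polarForm F (z y) (e y) (e y) ≠ 0 :=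
    (analyticAt_polarForm hz he he).continuousAt.eventually_ne
      (by rwa [hz0, he0, polarForm_self_self_self hF])
  obtain ⟨x, ⟨u, hu, hxu⟩, hx⟩ :=
    (((eventually_exists_add_sq_mul_eval_eq_zero F d m hne).filter_mono nhdsWithin_le_nhds).and
      (eventually_mem_nhdsWithin (s := {0}ᶜ))).exists
  exact ⟨q (x, u), e (x, u), by rw [hqF, hu, mul_zero], hqe _, hqee _ ▸ mul_ne_zero hx hxu⟩

lemma SmoothCubic.exists_polarForm_ne_zero [CompleteSpace K] [CharZero K] (hn : 3 ≤ n)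
    (hF : SmoothCubic F) (hne : (zeroSet F).Nonempty) :
    ∃ p e, eval p F = 0 ∧ polarForm F p p e = 0 ∧ polarForm F p e e ≠ 0 := by
  obtain ⟨p, hp, hpF⟩ : ∃ p ≠ 0, eval p F = 0 := hne.elim fun P hP => ⟨P.rep, P.rep_nonzero, hP⟩
  by_contra! hflat
  obtain ⟨m, hm⟩ := hF.exists_polarForm_eq_one hp
  obtain ⟨d, hd, hdF⟩ := hF.exists_polarForm_eq_zero_and_eval_ne_zero hn hp hpF
  have hppp : polarForm F p p p = 0 := by rwa [polarForm_self_self_self hF.1]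
  have hpdd : polarForm F p d d = 0 := hflat p d hpF hd
  have hpdp : polarForm F p d p = 0 := by rwa [polarForm_swap_right]
  have hpmp : polarForm F p m p = 1 := by rwa [polarForm_swap_right]
  have heval (c : K) : eval (d - c • p) F = eval d F := by
    have hddp : polarForm F d d p = 0 := by rwa [polarForm_swap_right, polarForm_swap_left]
    have hdpp : polarForm F d p p = 0 := by rwa [polarForm_swap_left]
    simpa [← sub_eq_add_neg, hddp, hdpp, hpF] using eval_smul_add_smul hF.1 d p 1 (-c)
  obtain ⟨q, e, hq, hqe, hqee⟩ := exists_polarForm_ne_zero_of_flat hF.1 hpF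
    (d := d - polarForm F p d m • p) (m := m - (polarForm F p m m / 2) • p)
    (by rwa [heval]) (by simp [hd, hppp]) (by simp [hm, hppp]) (by simp [hpdd, hpdp, hd, hppp])
    (by simp [hpdp, hm, hppp])
    (by simp only [map_sub, map_smul, LinearMap.sub_apply, LinearMap.smul_apply, smul_eq_mul, hm,
      hpmp, hppp]; ring)
  exact hqee (hflat q e hq hqe)

end NonFlatPoints

section TangentCurve

open scoped Polynomial

variable {K : Type*} [Field K] {n : ℕ} {F : MvPolynomial (Fin n) K}

/-- The curve of residual points `residual F p (L t)`, where `L` is a curve in the tangent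
hyperplane at `p`. -/
def residualCurve (F : MvPolynomial (Fin n) K) (p : Fin n → K) (L : Fin n → K[X]) (i : Fin n) :
    K[X] :=
  polarCurve F L p * L i - aeval L F * Polynomial.C (p i)

variable [CharZero K]

lemma evalAt_residualCurve (hF : F.IsHomogeneous 3) (p : Fin n → K) (L : Fin n → K[X]) (t : K) :
    evalAt (residualCurve F p L) t = residual F p (evalAt L t) := by
  have hpoly : polarForm F (evalAt L t) (evalAt L t) p =
      polarForm F p (evalAt L t) (evalAt L t) := by
    rw [polarForm_swap_right, polarForm_swap_left]
  ext i
  rw [evalAt, residualCurve, Polynomial.eval_sub, Polynomial.eval_mul, Polynomial.eval_mul,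
    eval_polarCurve hF, eval_aeval_curve, hpoly, residual, polarForm_self_self_self hF]
  simp [evalAt]

lemma aeval_residualCurve (hF : F.IsHomogeneous 3) {p : Fin n → K} {L : Fin n → K[X]}
    (hp : eval p F = 0) (hL : ∀ t, polarForm F p p (evalAt L t) = 0) :
    aeval (residualCurve F p L) F = 0 :=
  Polynomial.funext fun t => by
    rw [eval_aeval_curve, evalAt_residualCurve hF, eval_residual hF hp (hL t), Polynomial.eval_zero]

lemma linearIndependent_residual {p e f : Fin n → K} {s : K} (hs : s ≠ 0)
    (hli : LinearIndependent K ![f, e, p]) (he : polarForm F p e e ≠ 0)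
    (hf : polarForm F p (s • f + e) (s • f + e) ≠ 0) :
    LinearIndependent K ![residual F p (s • f + e), residual F p e] := by
  rw [LinearIndependent.pair_iff]
  intro a b hab
  rw [residual, residual] at hab
  generalize polarForm F p (s • f + e) (s • f + e) = c at hf hab
  generalize polarForm F (s • f + e) (s • f + e) (s • f + e) = k at hab
  have hcoeff := Fintype.linearIndependent_iff.1 hli ![3 * a * c * s,
    3 * (a * c + b * polarForm F p e e), -(a * k + b * polarForm F e e e)] (by
      rw [← hab, Fin.sum_univ_three]
      simp
      module)
  have ha : a = 0 := by simpa [hs, hf] using hcoeff 0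
  exact ⟨ha, by simpa [ha, he] using hcoeff 1⟩

lemma exists_curve_isTangentPair (hn : 4 ≤ n) (hF : F.IsHomogeneous 3) {p e : Fin n → K}
    (hp : eval p F = 0) (he : polarForm F p p e = 0) (hee : polarForm F p e e ≠ 0) :
    ∃ (Q : Fin n → K[X]) (w : K[X]), w ≠ 0 ∧ aeval Q F = 0 ∧ ¬ IsProjConst Q ∧
      ∀ t, w.eval t ≠ 0 → IsTangentPair F p (evalAt Q t) := by
  have hli : LinearIndependent K ![e, p] := by
    rw [LinearIndependent.pair_symm_iff]
    refine linearIndependent_pair_of_apply (polarForm F p e) (by rwa [polarForm_swap_right]) hee ?_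
    rintro rfl
    simp at hee
  obtain ⟨f, hf, hfep⟩ := exists_ker_linearIndependent_cons (polarForm F p p) hli
    (by simpa using Nat.lt_of_succ_le hn)
  let L := lineCurve e f
  have hw (t : K) : (polarCurve F L p).eval t = 3 * polarForm F p (t • f + e) (t • f + e) := by
    rw [eval_polarCurve hF, evalAt_lineCurve, polarForm_swap_right, polarForm_swap_left]
  have hL (t : K) : polarForm F p p (evalAt L t) = 0 := by simp [L, evalAt_lineCurve, hf, he]
  have hw0 : polarCurve F L p ≠ 0 := fun h => hee (by simpa [h] using (hw 0).symm)
  refine ⟨residualCurve F p L, polarCurve F L p, hw0, aeval_residualCurve hF hp hL,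
    fun hconst => ?_, fun t ht => ?_⟩
  · obtain ⟨s, hs⟩ : ∃ s, (.X * polarCurve F L p : K[X]).eval s ≠ 0 := by
      by_contra! h
      exact mul_ne_zero Polynomial.X_ne_zero hw0 (Polynomial.funext (by simpa using h))
    rw [Polynomial.eval_mul, Polynomial.eval_X, hw] at hs
    refine hconst.not_linearIndependent_evalAt s 0 ?_
    simpa [L, evalAt_residualCurve hF, evalAt_lineCurve] using linearIndependent_residual
      (left_ne_zero_of_mul hs) hfep hee (right_ne_zero_of_mul (right_ne_zero_of_mul hs))
  · rw [evalAt_residualCurve hF]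
    refine isTangentPair_residual hF hp (hL t) fun h => ht ?_
    rw [hw, ← evalAt_lineCurve, h, mul_zero]

end TangentCurve

section SweptPoints

open scoped Polynomial
open Polynomial (derivative wronskian)

variable {K : Type*} [Field K] [CharZero K] {n : ℕ} {F : MvPolynomial (Fin n) K}

lemma exists_apply_self_ne_zero {V : Type*} [AddCommGroup V] [Module K V] {B : V →ₗ[K] V →ₗ[K] K}
    (hB : ∀ u v, B u v = B v u) {W : Submodule K V} {d e : V} (hd : d ∈ W) (he : e ∈ W)
    (hde : B d e ≠ 0) : ∃ x ∈ W, B d x ≠ 0 ∧ B x x ≠ 0 := by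
  by_cases hdd : B d d = 0
  · by_cases hee : B e e = 0
    · exact ⟨d + e, add_mem hd he, by simpa [hdd] using hde, by
        simpa [hdd, hee, hB e d, ← two_mul] using hde⟩
    · exact ⟨e, he, hde, hee⟩
  · exact ⟨d, hd, hdd, hdd⟩

lemma exists_isTangentPair_polarForm_ne_zero (hF : F.IsHomogeneous 3) {q d e : Fin n → K}
    (hq : eval q F = 0) (hd : polarForm F q q d = 0) (he : polarForm F q q e = 0)
    (hde : polarForm F q d e ≠ 0) : ∃ r, IsTangentPair F q r ∧ polarForm F q d r ≠ 0 := by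
  obtain ⟨x, hx, hdx, hxx⟩ := exists_apply_self_ne_zero (polarForm_swap_right F q)
    (W := LinearMap.ker (polarForm F q q)) hd he hde
  have hdq : polarForm F q d q = 0 := by rwa [polarForm_swap_right]
  exact ⟨residual F q x, isTangentPair_residual hF hq hx hxx, by simp [residual, hdq, hxx, hdx]⟩

lemma SmoothCubic.exists_isTangentPair_of_not_isProjConst (hF : SmoothCubic F) {Q : Fin n → K[X]}
    {w : K[X]} (hw : w ≠ 0) (hQF : aeval Q F = 0) (hQ : ¬ IsProjConst Q) :
    ∃ t r, w.eval t ≠ 0 ∧ IsTangentPair F (evalAt Q t) r ∧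
      polarForm F (evalAt Q t) (evalAt (derivative ∘ Q) t) r ≠ 0 := by
  have hgauss := mt (hF.2.isProjConst_of_gaussCurve hF.1 (by norm_num)) hQ
  rw [isProjConst_iff_wronskian] at hgauss
  push Not at hgauss
  obtain ⟨i, j, hij⟩ := hgauss
  obtain ⟨t, ht⟩ : ∃ t, (w * wronskian (gaussCurve F Q i) (gaussCurve F Q j)).eval t ≠ 0 := by
    by_contra! h
    exact mul_ne_zero hw hij (Polynomial.funext (by simpa using h))
  rw [Polynomial.eval_mul] at ht
  have hqF : eval (evalAt Q t) F = 0 := by rw [← eval_aeval_curve, hQF, Polynomial.eval_zero]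
  have hwr := right_ne_zero_of_mul ht
  simp only [wronskian, Polynomial.eval_sub, Polynomial.eval_mul, eval_gaussCurve hF.1,
    eval_derivative_gaussCurve hF.1] at hwr
  -- Up to the factor `18`, the Wronskian pairs the velocity with this tangent vector `e`.
  obtain ⟨r, hr, hdr⟩ := exists_isTangentPair_polarForm_ne_zero hF.1 hqF
    (polarForm_derivative_eq_zero hF.1 hQF t)
    (e := polarForm F (evalAt Q t) (evalAt Q t) (Pi.single i 1) • Pi.single j 1 -
      polarForm F (evalAt Q t) (evalAt Q t) (Pi.single j 1) • Pi.single i 1)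
    (by simp [mul_comm]) fun h => hwr (by
      simp only [map_sub, map_smul, smul_eq_mul] at h
      linear_combination 18 * h)
  exact ⟨t, r, left_ne_zero_of_mul ht, hr, hdr⟩

end SweptPoints

section SweptOpenSet

open scoped Polynomial
open Polynomial (derivative)

lemma isOpen_setOf_exists_mk_eq {K : Type*} [Field K] [TopologicalSpace K] [ContinuousMul K]
    {n : ℕ} {V : Set (Fin n → K)} (hV : IsOpen V) :
    @IsOpen _ (projTop K n) {P | ∃ v ∈ V, ∃ hv : v ≠ 0, P = Projectivization.mk K v hv} := by
  rw [projTop, isOpen_coinduced]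
  have hpreimage : (fun v : {v : Fin n → K // v ≠ 0} => Projectivization.mk K v.1 v.2) ⁻¹'
      {P | ∃ v ∈ V, ∃ hv : v ≠ 0, P = Projectivization.mk K v hv} =
      ⋃ a : Kˣ, (fun v : {v : Fin n → K // v ≠ 0} => a • v.1) ⁻¹' V := by
    ext v
    simp only [Set.mem_preimage, Set.mem_ofPred_eq, Set.mem_iUnion, Projectivization.mk_eq_mk_iff]
    constructor
    · rintro ⟨u, huV, -, a, hau⟩
      exact ⟨a⁻¹, by simpa [← hau] using huV⟩
    · rintro ⟨a, ha⟩
      exact ⟨a • v.1, ha, (smul_ne_zero_iff_ne a).2 v.2, a⁻¹, by simp⟩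
  rw [hpreimage]
  exact isOpen_iUnion fun a => hV.preimage (continuous_subtype_val.const_smul (a : K))

variable {K : Type*} [NontriviallyNormedField K] [CompleteSpace K] [CharZero K] {n : ℕ}
  {F : MvPolynomial (Fin n) K}

lemma eventually_exists_polarForm_evalAt_eq_zero (hF : F.IsHomogeneous 3) (Q : Fin n → K[X])
    {t : K} {r : Fin n → K} (hr : polarForm F (evalAt Q t) (evalAt Q t) r = 0)
    (hdr : polarForm F (evalAt Q t) (evalAt (derivative ∘ Q) t) r ≠ 0)
    {P : (Fin n → K) × K → Prop} (hP : ∀ᶠ y in 𝓝 (r, t), P y) :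
    ∀ᶠ x in 𝓝 r, ∃ s, polarForm F (evalAt Q s) (evalAt Q s) x = 0 ∧ P (x, s) := by
  have hQ : AnalyticAt K (fun y : (Fin n → K) × K => evalAt Q y.2) (r, t) :=
    analyticAt_pi_iff.2 fun i => analyticAt_snd.aeval_polynomial (Q i)
  have hf : AnalyticAt K (fun y : (Fin n → K) × K => (polarCurve F Q y.1).eval y.2) (r, t) := by
    simp only [eval_polarCurve hF]
    exact analyticAt_const.mul (analyticAt_polarForm hQ hQ analyticAt_fst)
  have hroots := eventually_exists_root_of_hasStrictFDerivAt hf.hasStrictFDerivAt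
    (by simp [eval_polarCurve hF, hr]) ((polarCurve F Q r).hasDerivAt t)
    (by simpa [eval_derivative_polarCurve hF] using hdr) hP
  simpa [eval_polarCurve hF] using hroots

lemma SmoothCubic.eventually_exists_isTangentPair (hF : SmoothCubic F) {Q : Fin n → K[X]}
    {w : K[X]} (hw : w ≠ 0) (hQF : aeval Q F = 0) (hQ : ¬ IsProjConst Q) :
    ∃ r, r ≠ 0 ∧ eval r F = 0 ∧ ∀ᶠ x in 𝓝 r, eval x F = 0 →
      ∃ t, w.eval t ≠ 0 ∧ IsTangentPair F (evalAt Q t) x := by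
  obtain ⟨t, r, hwt, htr, hdr⟩ := hF.exists_isTangentPair_of_not_isProjConst hw hQF hQ
  have hcont : Continuous fun y : (Fin n → K) × K => ![evalAt Q y.2, y.1] :=
    continuous_pi <| Fin.forall_fin_two.2
      ⟨continuous_pi fun i => (Q i).continuous.comp continuous_snd, continuous_fst⟩
  have hopen : ∀ᶠ y : (Fin n → K) × K in 𝓝 (r, t),
      w.eval y.2 ≠ 0 ∧ LinearIndependent K ![evalAt Q y.2, y.1] := by
    refine .and ?_ ((isOpen_setOfPred_linearIndependent.preimage hcont).mem_nhds
      htr.linearIndependent)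
    exact (w.continuous.comp continuous_snd).continuousAt.eventually_ne hwt
  refine ⟨r, htr.linearIndependent.ne_zero 1, htr.eval_right, ?_⟩
  filter_upwards [eventually_exists_polarForm_evalAt_eq_zero hF.1 Q htr.polarForm_eq_zero hdr hopen]
    with x hx hxF
  obtain ⟨s, hs, hws, hli⟩ := hx
  exact ⟨s, hws, hli, by rw [← eval_aeval_curve, hQF, Polynomial.eval_zero], hxF, hs⟩

lemma SmoothCubic.exists_isOpen_isTangentPair_isTangentPair (hn : 4 ≤ n) (hF : SmoothCubic F)
    (hne : (zeroSet F).Nonempty) :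
    ∃ p : Fin n → K, ∃ V : Set (Fin n → K), IsOpen V ∧ (∃ r ∈ V, r ≠ 0 ∧ eval r F = 0) ∧
      ∀ x ∈ V, eval x F = 0 → ∃ y, IsTangentPair F p y ∧ IsTangentPair F y x := by
  obtain ⟨p, e, hp, he, hee⟩ := hF.exists_polarForm_ne_zero (Nat.le_of_succ_le hn) hne
  obtain ⟨Q, w, hw, hQF, hQ, hpQ⟩ := exists_curve_isTangentPair hn hF.1 hp he hee
  obtain ⟨r, hr, hrF, hnear⟩ := hF.eventually_exists_isTangentPair hw hQF hQ
  obtain ⟨V, hV, hVopen, hrV⟩ := eventually_nhds_iff.1 hnear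
  refine ⟨p, V, hVopen, ⟨r, hrV, hr, hrF⟩, fun x hx hxF => ?_⟩
  obtain ⟨t, hwt, ht⟩ := hV x hx hxF
  exact ⟨evalAt Q t, hpQ t hwt, ht⟩

end SweptOpenSet

lemma eval_eq_zero_of_mk_mem_zeroSet {K : Type*} [Field K] {n d : ℕ} {F : MvPolynomial (Fin n) K}
    (hF : F.IsHomogeneous d) {v : Fin n → K} {hv : v ≠ 0}
    (h : Projectivization.mk K v hv ∈ zeroSet F) : eval v F = 0 := by
  obtain ⟨a, ha⟩ := Projectivization.exists_smul_eq_mk_rep K v hv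
  rw [zeroSet, Set.mem_ofPred_eq, ← ha, Units.smul_def, eval_smul_of_isHomogeneous hF] at h
  exact (mul_eq_zero.1 h).resolve_left (pow_ne_zero d a.ne_zero)

end CubicSurf

open CubicSurf in
theorem exists_open_set_constant_class_general {K : Type*} [NontriviallyNormedField K]
    [CompleteSpace K] [CharZero K] {n : ℕ} (hn : 4 ≤ n) (F : MvPolynomial (Fin n) K)
    (hF : SmoothCubic F) (hne : (zeroSet F).Nonempty) :
    ∃ W : Set (Projectivization K (Fin n → K)),
      W ⊆ zeroSet F ∧ W.Nonempty ∧
      (∃ U, @IsOpen _ (projTop K n) U ∧ W = U ∩ zeroSet F) ∧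
      ∀ P₁ P₂ : zeroSet F, P₁.1 ∈ W → P₂.1 ∈ W → HClass F P₁ = HClass F P₂ := by
  obtain ⟨p, V, hV, ⟨r, hrV, hr, hrF⟩, htangent⟩ :=
    hF.exists_isOpen_isTangentPair_isTangentPair hn hne
  let U : Set (Projectivization K (Fin n → K)) :=
    {P | ∃ v ∈ V, ∃ hv : v ≠ 0, P = Projectivization.mk K v hv}
  refine ⟨U ∩ zeroSet F, Set.inter_subset_right, ⟨Projectivization.mk K r hr, ⟨r, hrV, hr, rfl⟩,
    mk_mem_zeroSet hF.1 hr hrF⟩, ⟨U, isOpen_setOf_exists_mk_eq hV, rfl⟩, ?_⟩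
  rintro ⟨_, hX₁⟩ ⟨_, hX₂⟩ ⟨⟨x₁, hx₁V, hx₁, rfl⟩, -⟩ ⟨⟨x₂, hx₂V, hx₂, rfl⟩, -⟩
  obtain ⟨y₁, hpy₁, hyx₁⟩ := htangent x₁ hx₁V (eval_eq_zero_of_mk_mem_zeroSet hF.1 hX₁)
  obtain ⟨y₂, hpy₂, hyx₂⟩ := htangent x₂ hx₂V (eval_eq_zero_of_mk_mem_zeroSet hF.1 hX₂)
  exact HClass_eq_of_isTangentPair hF.1 hpy₁ hyx₁ hpy₂ hyx₂ rfl rfl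

open CubicSurf MvPolynomial in
/-- Let `K` be a local field and `S` a smooth cubic surface over `K`
with `S(K) ≠ ∅`. Then there is a non-empty subset `W ⊆ S(K)`, open in the topology
induced by `K`, such that `[P₁] = [P₂]` in `H_S(K)` for all `P₁, P₂ ∈ W`. -/
theorem exists_open_set_constant_class
    {K : Type*} [Field K] [TopologicalSpace K] (hK : IsLocalField K)
    (F : MvPolynomial (Fin 4) K) (hF : SmoothCubic F)
    (hne : (zeroSet F).Nonempty) :
    ∃ W : Set (Projectivization K (Fin 4 → K)),
      W ⊆ zeroSet F ∧ W.Nonempty ∧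
      (∃ U, @IsOpen _ (projTop K 4) U ∧ W = U ∩ zeroSet F) ∧
      ∀ P₁ P₂ : zeroSet F, P₁.1 ∈ W → P₂.1 ∈ W → HClass F P₁ = HClass F P₂ := by
  obtain ⟨i, rfl, rfl, _, _⟩ := hK.exists_nontriviallyNormedField
  exact exists_open_set_constant_class_general le_rfl F hF hne
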